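/- Let f be a C^∞ positive function on an open interval satisfying f''(t) = 8f(t)³ - 8f(t) and f'(t)² = 4f(t)⁴ - 8f(t)² + 53/12 for all t. Then B₄[f] vanishes identically; that is, f is a particular solution of the Bach-flat equation B₄ = 0. -/

import Mathlib

/-!
Writing the equation `f'' = 8f³ - 8f` and its derivative as `ρ₂ = 8f² - 8` and
`ρ₃ = (24f² - 8) ρ₁`, in `6 B₄` the terms of the form `c ρ₁²` with `c` constant cancel. What is left
involves `ρ₁` only through `f² ρ₁² = f'²` and equals `12 (f'² - 4f⁴ + 8f²) - 53`. The quantity in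
parentheses is the first integral of the equation, so `53/12` is the one level on which `B₄`
vanishes.
-/

open Real

/-- `ρ_i = f⁽ⁱ⁾/f`, the ratio of the `i`-th derivative of `f` to `f`. -/
noncomputable def rho (f : ℝ → ℝ) (i : ℕ) (t : ℝ) : ℝ := iteratedDeriv i f t / f t

/-- The component `B₁ = B₂` of the Bach tensor of the cohomogeneity-one metric `g(f)`. -/
noncomputable def B1 (f : ℝ → ℝ) (t : ℝ) : ℝ :=
  (-(rho f 4 t) + rho f 1 t * rho f 3 t + 2 * (rho f 2 t) ^ 2 - (rho f 1 t) ^ 2 * rho f 2 t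
    + 20 * (f t) ^ 2 * rho f 2 t + 20 * (f t) ^ 2 * (rho f 1 t) ^ 2
    - 48 * (f t) ^ 4 + 64 * (f t) ^ 2 - 11) / 6

/-- The component `B₂` of the Bach tensor of the cohomogeneity-one metric `g(f)`. -/
noncomputable def B2 (f : ℝ → ℝ) (t : ℝ) : ℝ :=
  (-(rho f 4 t) + rho f 1 t * rho f 3 t + 2 * (rho f 2 t) ^ 2 - (rho f 1 t) ^ 2 * rho f 2 t
    + 20 * (f t) ^ 2 * rho f 2 t + 20 * (f t) ^ 2 * (rho f 1 t) ^ 2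
    - 48 * (f t) ^ 4 + 64 * (f t) ^ 2 - 11) / 6

/-- The component `B₃` of the Bach tensor of the cohomogeneity-one metric `g(f)`. -/
noncomputable def B3 (f : ℝ → ℝ) (t : ℝ) : ℝ :=
  (2 * rho f 4 t - 4 * rho f 1 t * rho f 3 t - 3 * (rho f 2 t) ^ 2
    + 4 * (rho f 1 t) ^ 2 * rho f 2 t - 40 * (f t) ^ 2 * rho f 2 t
    - 20 * (f t) ^ 2 * (rho f 1 t) ^ 2 + 80 * (f t) ^ 4 - 96 * (f t) ^ 2 + 11) / 6

/-- The component `B₄` of the Bach tensor of the cohomogeneity-one metric `g(f)`. -/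
noncomputable def B4 (f : ℝ → ℝ) (t : ℝ) : ℝ :=
  (2 * rho f 1 t * rho f 3 t - (rho f 2 t) ^ 2 - 2 * (rho f 1 t) ^ 2 * rho f 2 t
    - 20 * (f t) ^ 2 * (rho f 1 t) ^ 2 + 16 * (f t) ^ 4 - 32 * (f t) ^ 2 + 11) / 6

open scoped Topology

theorem iteratedDeriv_three_of_deriv_deriv_eventuallyEq_comp {𝕜 : Type*}
    [NontriviallyNormedField 𝕜] {f F : 𝕜 → 𝕜} {F' t : 𝕜} (hf : DifferentiableAt 𝕜 f t)
    (hF : HasDerivAt F F' (f t)) (hode : deriv (deriv f) =ᶠ[𝓝 t] F ∘ f) :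
    iteratedDeriv 3 f t = F' * deriv f t := by
  rw [iteratedDeriv_succ, iteratedDeriv_succ, iteratedDeriv_one, hode.deriv_eq]
  exact (hF.comp t hf.hasDerivAt).deriv

theorem mul_rho {f : ℝ → ℝ} {t : ℝ} (h0 : f t ≠ 0) (i : ℕ) :
    f t * rho f i t = iteratedDeriv i f t :=
  mul_div_cancel₀ _ h0

theorem rho_two_of_deriv_deriv_eq {f : ℝ → ℝ} {t : ℝ} (h0 : f t ≠ 0)
    (hode : deriv (deriv f) t = 8 * f t ^ 3 - 8 * f t) : rho f 2 t = 8 * f t ^ 2 - 8 := by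
  apply mul_left_cancel₀ h0
  rw [mul_rho h0, iteratedDeriv_succ, iteratedDeriv_one, hode]
  ring

theorem rho_three_of_deriv_deriv_eventuallyEq {f : ℝ → ℝ} {t : ℝ} (hf : DifferentiableAt ℝ f t)
    (hode : ∀ᶠ s in 𝓝 t, deriv (deriv f) s = 8 * f s ^ 3 - 8 * f s) :
    rho f 3 t = (24 * f t ^ 2 - 8) * rho f 1 t := by
  have hcubic : HasDerivAt (fun y : ℝ => 8 * y ^ 3 - 8 * y) (24 * f t ^ 2 - 8) (f t) := by
    have h := ((hasDerivAt_pow 3 (f t)).const_mul 8).sub ((hasDerivAt_id (f t)).const_mul 8)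
    exact h.congr_deriv (by norm_num; ring)
  rw [rho, rho, iteratedDeriv_three_of_deriv_deriv_eventuallyEq_comp hf hcubic hode,
    iteratedDeriv_one, mul_div_assoc]

theorem B4_eq_of_deriv_deriv_eventuallyEq {f : ℝ → ℝ} {t : ℝ} (hf : DifferentiableAt ℝ f t)
    (h0 : f t ≠ 0) (hode : ∀ᶠ s in 𝓝 t, deriv (deriv f) s = 8 * f s ^ 3 - 8 * f s) :
    B4 f t = 2 * (deriv f t ^ 2 - (4 * f t ^ 4 - 8 * f t ^ 2 + 53 / 12)) := by
  have hrho_one : deriv f t = f t * rho f 1 t := by rw [mul_rho h0, iteratedDeriv_one]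
  rw [B4, rho_three_of_deriv_deriv_eventuallyEq hf hode,
    rho_two_of_deriv_deriv_eq h0 hode.self_of_nhds, hrho_one]
  ring

theorem bach_flat_particular_solution_two_general {f : ℝ → ℝ} {t : ℝ}
    (hf : DifferentiableAt ℝ f t) (h0 : f t ≠ 0)
    (hode : ∀ᶠ s in 𝓝 t, deriv (deriv f) s = 8 * f s ^ 3 - 8 * f s) :
    B4 f t = 0 ↔ deriv f t ^ 2 = 4 * f t ^ 4 - 8 * f t ^ 2 + 53 / 12 := by
  simp [B4_eq_of_deriv_deriv_eventuallyEq hf h0 hode, sub_eq_zero]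

/-- The particular solution `(f')² = 4f⁴ - 8f² + 53/12` of the Bach-flat equation. -/
theorem bach_flat_particular_solution_two (a b : ℝ) (f : ℝ → ℝ)
    (hf : ContDiff ℝ (⊤ : ℕ∞) f) (hpos : ∀ t ∈ Set.Ioo a b, 0 < f t)
    (hode : ∀ t ∈ Set.Ioo a b, deriv (deriv f) t = 8 * (f t) ^ 3 - 8 * f t)
    (hfi : ∀ t ∈ Set.Ioo a b,
      (deriv f t) ^ 2 = 4 * (f t) ^ 4 - 8 * (f t) ^ 2 + 53 / 12) :
    ∀ t ∈ Set.Ioo a b, B4 f t = 0 := fun t ht =>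
  (bach_flat_particular_solution_two_general (hf.differentiable (by simp) t) (hpos t ht).ne'
    (Filter.eventually_of_mem (Ioo_mem_nhds ht.1 ht.2) hode)).mpr (hfi t ht)
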